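/- Let T > 0 and Ω_T = (0,1) × (0,T) ⊂ ℝ². Then there exists a constant C = C(T) > 0 such that for every function u that is smooth on an open neighborhood of the closure of Ω_T, ‖u‖_{L^∞(Ω_T)} ≤ C (1 + (‖u‖_{BMOₚ(Ω_T)} + ‖u‖_{L¹(Ω_T)}) (1 + log⁺ ‖u‖_{W₂^{2,1}(Ω_T)})). -/

import Mathlib

open MeasureTheory Real
open scoped ENNReal

noncomputable section

/-- The parabolic distance `‖z‖ₚ = max |x| √|t|` from `z = (x,t) ∈ ℝ²` to the origin. -/
def pnorm2 (z : ℝ × ℝ) : ℝ := max |z.1| (Real.sqrt |z.2|)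

/-- The parabolic cube of radius `r` centered at `z₀` in `ℝ²`. -/
def pCube2 (z₀ : ℝ × ℝ) (r : ℝ) : Set (ℝ × ℝ) := {z | pnorm2 (z - z₀) < r}

/-- The set of mean oscillations `⨍_Q |u - u_Q|` of `u` over parabolic cubes `Q ⊆ O`. -/
def oscSet2 (O : Set (ℝ × ℝ)) (u : ℝ × ℝ → ℝ) : Set ℝ :=
  {v | ∃ z₀ r, 0 < r ∧ pCube2 z₀ r ⊆ O ∧
    v = ⨍ z in pCube2 z₀ r, |u z - ⨍ w in pCube2 z₀ r, u w|}

/-- The parabolic BMO norm of `u` over `O ⊆ ℝ²`. -/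
def pBMO2 (O : Set (ℝ × ℝ)) (u : ℝ × ℝ → ℝ) : ℝ := sSup (oscSet2 O u)

/-- `log⁺ x = max (log x) 0`. -/
def logPlus (x : ℝ) : ℝ := max (Real.log x) 0

/-- The domain `Ω_T = (0,1) × (0,T)`. -/
def Omega (T : ℝ) : Set (ℝ × ℝ) := Set.Ioo (0 : ℝ) 1 ×ˢ Set.Ioo (0 : ℝ) T

/-- The domain `Ω̂_T = (-1,2) × (0,T)`. -/
def OmegaHat (T : ℝ) : Set (ℝ × ℝ) := Set.Ioo (-1 : ℝ) 2 ×ˢ Set.Ioo (0 : ℝ) T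

/-- The domain `Ω̃_T = (-1,2) × (-T,2T)`. -/
def OmegaTilde (T : ℝ) : Set (ℝ × ℝ) := Set.Ioo (-1 : ℝ) 2 ×ˢ Set.Ioo (-T) (2 * T)

/-- The spatial reflection extension of `u` from `[0,1]` to `(-1,2)` (in the `x` variable). -/
def extSpace (u : ℝ × ℝ → ℝ) : ℝ × ℝ → ℝ := fun p =>
  if p.1 < 0 then -3 * u (-p.1, p.2) + 4 * u (-p.1 / 2, p.2)
  else if 1 < p.1 then -3 * u (2 - p.1, p.2) + 4 * u ((3 - p.1) / 2, p.2)
  else u p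

/-- The temporal reflection extension from `[0,T]` to `(-T,2T)` (in the `t` variable). -/
def extTime (T : ℝ) (v : ℝ × ℝ → ℝ) : ℝ × ℝ → ℝ := fun p =>
  if p.2 < 0 then v (p.1, -p.2)
  else if T < p.2 then v (p.1, 2 * T - p.2)
  else v p

/-- The reflection extension `ũ` of `u` from `Ω_T` to `Ω̃_T = (-1,2) × (-T,2T)`. -/
def uext (T : ℝ) (u : ℝ × ℝ → ℝ) : ℝ × ℝ → ℝ := extTime T (extSpace u)

/-- The reflection extension `ũ`, extended by `0` outside `Ω̃_T`. -/
def uextZ (T : ℝ) (u : ℝ × ℝ → ℝ) : ℝ × ℝ → ℝ :=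
  (OmegaTilde T).indicator (uext T u)

/-- The partial derivative `u_x`. -/
def Dx2 (u : ℝ × ℝ → ℝ) : ℝ × ℝ → ℝ := fun p => fderiv ℝ u p (1, 0)

/-- The partial derivative `u_t`. -/
def Dt2 (u : ℝ × ℝ → ℝ) : ℝ × ℝ → ℝ := fun p => fderiv ℝ u p (0, 1)

/-- The `L²(O)` norm. -/
def L2norm2 (O : Set (ℝ × ℝ)) (v : ℝ × ℝ → ℝ) : ℝ :=
  (eLpNorm v 2 (volume.restrict O)).toReal

/-- The parabolic Sobolev norm
`‖u‖_{W₂^{2,1}(O)} = ‖u‖_{L²} + ‖u_x‖_{L²} + ‖u_{xx}‖_{L²} + ‖u_t‖_{L²}`. -/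
def W21norm (O : Set (ℝ × ℝ)) (u : ℝ × ℝ → ℝ) : ℝ :=
  L2norm2 O u + L2norm2 O (Dx2 u) + L2norm2 O (Dx2 (Dx2 u)) + L2norm2 O (Dt2 u)

/-!
Every point `z` of the domain is a corner of a parabolic cube `Q` of fixed radius inside the domain,
and so of the cubes `Q_k` obtained from `Q` by `k` parabolic dilations of ratio `1/4` centred at
`z`. Let `A_k` be twice the mean of `u` over the half of `Q_k` adjacent to the line `x = z.1`, minus
the mean over `Q_k`. The first-order term in `x` cancels, so `A_k - A_{k+1}` involves only `u_xx`
and `u_t`, and is at most a constant times `2^{-k} ‖u‖_W`; since `A_k → u z`, the difference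
`A_k - u z` obeys the same bound. (Without the cancellation `u_x` would enter, with the growing
factor `2^k`.) On the other hand `A_k` differs from the mean of `u` over `Q` by at most a constant
times `(1 + k) ‖u‖_BMO`. Choosing `k` comparable with `log⁺ ‖u‖_W` makes `2^{-k} ‖u‖_W ≤ 1`.
-/

open Set Filter Topology

section Calculus

variable {E : Type*} [NormedAddCommGroup E] [NormedSpace ℝ E] {g g' g'' : ℝ → E} {a b c d : ℝ}

lemma norm_sub_le_intervalIntegral_norm_deriv [CompleteSpace E]
    (hg : ∀ x ∈ Icc a b, HasDerivAt g (g' x) x) (hg' : IntervalIntegrable g' volume a b)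
    (hc : c ∈ Icc a b) (hd : d ∈ Icc a b) :
    ‖g d - g c‖ ≤ ∫ x in a..b, ‖g' x‖ := by
  wlog hcd : c ≤ d generalizing c d
  · rw [norm_sub_rev]
    exact this hd hc (le_of_not_ge hcd)
  have hsub : Icc c d ⊆ Icc a b := Icc_subset_Icc hc.1 hd.2
  have hint : IntervalIntegrable g' volume c d := by
    refine hg'.mono_set ?_
    rwa [uIcc_of_le hcd, uIcc_of_le (hc.1.trans hc.2)]
  calc ‖g d - g c‖ = ‖∫ x in c..d, g' x‖ := by
        rw [intervalIntegral.integral_eq_sub_of_hasDerivAt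
          (fun x hx => hg x (hsub (by rwa [uIcc_of_le hcd] at hx))) hint]
    _ ≤ ∫ x in c..d, ‖g' x‖ := intervalIntegral.norm_integral_le_integral_norm hcd
    _ ≤ ∫ x in a..b, ‖g' x‖ := intervalIntegral.integral_mono_interval hc.1 hcd hd.2
        (Eventually.of_forall fun x => norm_nonneg _) hg'.norm

/-- The second difference is the increment of `x ↦ g (x + (b - a) / 2) - g x`, whose derivative is
an increment of `g'`. -/
lemma norm_second_difference_le [CompleteSpace E] (hab : a ≤ b)
    (hg : ∀ x ∈ Icc a b, HasDerivAt g (g' x) x) (hg' : ∀ x ∈ Icc a b, HasDerivAt g' (g'' x) x)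
    (hg'' : IntervalIntegrable g'' volume a b) :
    ‖(g b - g ((a + b) / 2)) - (g ((a + b) / 2) - g a)‖ ≤
      (b - a) / 2 * ∫ x in a..b, ‖g'' x‖ := by
  set δ := (b - a) / 2 with hδ
  have hmem {x : ℝ} (hx : x ∈ Icc a (a + δ)) : x ∈ Icc a b ∧ x + δ ∈ Icc a b := by
    constructor <;> constructor <;> linarith [hx.1, hx.2]
  have hderiv (x : ℝ) (hx : x ∈ Icc a (a + δ)) : HasDerivWithinAt (fun x => g (x + δ) - g x)
      (g' (x + δ) - g' x) (Icc a (a + δ)) x :=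
    (((hg _ (hmem hx).2).comp_add_const x δ).sub (hg x (hmem hx).1)).hasDerivWithinAt
  have hbound (x : ℝ) (hx : x ∈ Icc a (a + δ)) :
      ‖g' (x + δ) - g' x‖ ≤ ∫ x in a..b, ‖g'' x‖ :=
    norm_sub_le_intervalIntegral_norm_deriv hg' hg'' (hmem hx).1 (hmem hx).2
  have hδ₀ : 0 ≤ δ := by linarith
  have hincr := (convex_Icc a (a + δ)).norm_image_sub_le_of_norm_hasDerivWithin_le hderiv hbound
    (left_mem_Icc.2 (by linarith)) (right_mem_Icc.2 (by linarith))
  have hmid : a + δ = (a + b) / 2 := by rw [hδ]; ring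
  have hend : (a + b) / 2 + δ = b := by rw [hδ]; ring
  rwa [add_sub_cancel_left, Real.norm_of_nonneg hδ₀, hmid, hend, mul_comm] at hincr

end Calculus

section ChangeOfVariables

variable {E : Type*} [NormedAddCommGroup E] {c v : ℝ × ℝ}

lemma measurableEmbedding_add_mul (hv₁ : v.1 ≠ 0) (hv₂ : v.2 ≠ 0) :
    MeasurableEmbedding fun y : ℝ × ℝ => c + v * y :=
  (measurableEmbedding_addLeft c).comp
    ((measurableEmbedding_mulLeft₀ hv₁).prodMap (measurableEmbedding_mulLeft₀ hv₂))

lemma map_add_mul_volume (hv₁ : v.1 ≠ 0) (hv₂ : v.2 ≠ 0) :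
    Measure.map (fun y : ℝ × ℝ => c + v * y) volume = ENNReal.ofReal |v.1 * v.2|⁻¹ • volume := by
  have hmul : Measure.map (v * ·) (volume : Measure (ℝ × ℝ)) =
      ENNReal.ofReal |v.1 * v.2|⁻¹ • volume := by
    change Measure.map (Prod.map (v.1 * ·) (v.2 * ·)) (volume.prod volume) = _
    rw [← Measure.map_prod_map _ _ (by fun_prop) (by fun_prop), Real.map_volume_mul_left hv₁,
      Real.map_volume_mul_left hv₂, Measure.prod_smul_left, Measure.prod_smul_right, smul_smul,
      ← ENNReal.ofReal_mul (abs_nonneg _), ← abs_mul, ← mul_inv, abs_inv, Measure.volume_eq_prod]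
  have hcomp : (fun y : ℝ × ℝ => c + v * y) = (c + ·) ∘ (v * ·) := rfl
  rw [hcomp, ← Measure.map_map (by fun_prop) (by fun_prop), hmul, Measure.map_smul,
    map_add_left_eq_self]

lemma integrableOn_preimage_comp_add_mul {f : ℝ × ℝ → E} {s : Set (ℝ × ℝ)} (hf : IntegrableOn f s)
    (hv₁ : v.1 ≠ 0) (hv₂ : v.2 ≠ 0) :
    IntegrableOn (fun y => f (c + v * y)) ((fun y => c + v * y) ⁻¹' s) := by
  refine ((measurableEmbedding_add_mul hv₁ hv₂).integrableOn_map_iff (f := f)).1 ?_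
  rw [map_add_mul_volume hv₁ hv₂, IntegrableOn, Measure.restrict_smul]
  exact hf.smul_measure ENNReal.ofReal_ne_top

lemma setIntegral_preimage_comp_add_mul [NormedSpace ℝ E] (f : ℝ × ℝ → E) (s : Set (ℝ × ℝ))
    (hv₁ : v.1 ≠ 0) (hv₂ : v.2 ≠ 0) :
    ∫ y in (fun y => c + v * y) ⁻¹' s, f (c + v * y) = |v.1 * v.2|⁻¹ • ∫ z in s, f z := by
  rw [← (measurableEmbedding_add_mul hv₁ hv₂).setIntegral_map f s, map_add_mul_volume hv₁ hv₂,
    Measure.restrict_smul, integral_smul_measure, ENNReal.toReal_ofReal (by positivity)]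

end ChangeOfVariables

section Fubini

variable {α β E : Type*} [MeasurableSpace α] [MeasurableSpace β] [NormedAddCommGroup E]
  [NormedSpace ℝ E] {μ : Measure α} {ν : Measure β} [SFinite ν] {f : α × β → E}

lemma integral_prod_integral_fst [IsProbabilityMeasure μ] (hf : Integrable f (μ.prod ν)) :
    ∫ z, ∫ x, f (x, z.2) ∂μ ∂μ.prod ν = ∫ z, f z ∂μ.prod ν := by
  rw [integral_fun_snd fun t => ∫ x, f (x, t) ∂μ, integral_prod_symm _ hf, probReal_univ, one_smul]

lemma integral_prod_integral_snd [SFinite μ] [IsProbabilityMeasure ν]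
    (hf : Integrable f (μ.prod ν)) :
    ∫ z, ∫ t, f (z.1, t) ∂ν ∂μ.prod ν = ∫ z, f z ∂μ.prod ν := by
  rw [integral_fun_fst fun x => ∫ t, f (x, t) ∂ν, integral_prod _ hf, probReal_univ, one_smul]

end Fubini

section UnitSquare

/-- The open unit square, on which every parabolic cube is parametrized; integrals over it are
averages. -/
def unitSquare : Set (ℝ × ℝ) := Ioo 0 1 ×ˢ Ioo 0 1

instance : IsProbabilityMeasure (volume.restrict (Ioo (0 : ℝ) 1)) := ⟨by simp⟩

lemma volume_restrict_unitSquare :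
    volume.restrict unitSquare = (volume.restrict (Ioo 0 1)).prod (volume.restrict (Ioo 0 1)) :=
  (Measure.prod_restrict _ _).symm

instance : IsProbabilityMeasure (volume.restrict unitSquare) := by
  rw [volume_restrict_unitSquare]
  infer_instance

lemma measurableSet_unitSquare : MeasurableSet unitSquare :=
  measurableSet_Ioo.prod measurableSet_Ioo

variable {f w : ℝ × ℝ → ℝ} {v : ℝ × ℝ} {M : ℝ}

lemma integrableOn_unitSquare_of_continuous (hf : Continuous f) : IntegrableOn f unitSquare :=
  (hf.continuousOn.integrableOn_compact (isCompact_Icc.prod isCompact_Icc)).mono_set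
    (prod_mono Ioo_subset_Icc_self Ioo_subset_Icc_self)

lemma unitSquare_subset_preimage_mul (hv₁ : v.1 ∈ Ioc 0 1) (hv₂ : v.2 ∈ Ioc 0 1) :
    unitSquare ⊆ (fun y => 0 + v * y) ⁻¹' unitSquare := by
  rintro y ⟨⟨hy₁, hy₁'⟩, hy₂, hy₂'⟩
  simp only [zero_add]
  exact ⟨⟨mul_pos hv₁.1 hy₁, mul_lt_one_of_nonneg_of_lt_one_right hv₁.2 hy₁.le hy₁'⟩,
    mul_pos hv₂.1 hy₂, mul_lt_one_of_nonneg_of_lt_one_right hv₂.2 hy₂.le hy₂'⟩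

lemma integrableOn_unitSquare_comp_mul (hf : IntegrableOn f unitSquare) (hv₁ : v.1 ∈ Ioc 0 1)
    (hv₂ : v.2 ∈ Ioc 0 1) : IntegrableOn (fun y => f (v * y)) unitSquare := by
  have h := (integrableOn_preimage_comp_add_mul (c := 0) hf hv₁.1.ne' hv₂.1.ne').mono_set
    (unitSquare_subset_preimage_mul hv₁ hv₂)
  simpa only [zero_add] using h

lemma setIntegral_unitSquare_comp_mul_le (hf : IntegrableOn f unitSquare)
    (hf₀ : ∀ z ∈ unitSquare, 0 ≤ f z) (hv₁ : v.1 ∈ Ioc 0 1) (hv₂ : v.2 ∈ Ioc 0 1) :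
    ∫ y in unitSquare, f (v * y) ≤ (v.1 * v.2)⁻¹ * ∫ y in unitSquare, f y := by
  have hmeas : MeasurableSet ((fun y : ℝ × ℝ => 0 + v * y) ⁻¹' unitSquare) :=
    (measurableEmbedding_add_mul hv₁.1.ne' hv₂.1.ne').measurable measurableSet_unitSquare
  calc ∫ y in unitSquare, f (v * y) = ∫ y in unitSquare, f (0 + v * y) := by simp only [zero_add]
    _ ≤ ∫ y in (fun y => 0 + v * y) ⁻¹' unitSquare, f (0 + v * y) :=
        setIntegral_mono_set (integrableOn_preimage_comp_add_mul hf hv₁.1.ne' hv₂.1.ne')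
          ((ae_restrict_iff' hmeas).2 (Eventually.of_forall fun y hy => hf₀ _ hy))
          (unitSquare_subset_preimage_mul hv₁ hv₂).eventuallyLE
    _ = (v.1 * v.2)⁻¹ * ∫ y in unitSquare, f y := by
        rw [setIntegral_preimage_comp_add_mul f unitSquare hv₁.1.ne' hv₂.1.ne',
          abs_of_pos (mul_pos hv₁.1 hv₂.1), smul_eq_mul]

lemma setIntegral_unitSquare_le_of_le_integral_fst {F : ℝ × ℝ → ℝ} (hF : IntegrableOn F unitSquare)
    (hf : IntegrableOn f unitSquare)
    (hFf : ∀ y ∈ unitSquare, F y ≤ ∫ x in (0 : ℝ)..1, f (x, y.2)) :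
    ∫ y in unitSquare, F y ≤ ∫ y in unitSquare, f y := by
  simp only [intervalIntegral.integral_of_le zero_le_one, integral_Ioc_eq_integral_Ioo] at hFf
  refine (setIntegral_mono_on hF ?_ measurableSet_unitSquare hFf).trans_eq ?_ <;>
    rw [IntegrableOn, volume_restrict_unitSquare] at *
  · exact hf.integral_prod_right.comp_snd _
  · exact integral_prod_integral_fst hf

lemma setIntegral_unitSquare_le_of_le_integral_snd {F : ℝ × ℝ → ℝ} (hF : IntegrableOn F unitSquare)
    (hf : IntegrableOn f unitSquare)
    (hFf : ∀ y ∈ unitSquare, F y ≤ ∫ t in (0 : ℝ)..1, f (y.1, t)) :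
    ∫ y in unitSquare, F y ≤ ∫ y in unitSquare, f y := by
  simp only [intervalIntegral.integral_of_le zero_le_one, integral_Ioc_eq_integral_Ioo] at hFf
  refine (setIntegral_mono_on hF ?_ measurableSet_unitSquare hFf).trans_eq ?_ <;>
    rw [IntegrableOn, volume_restrict_unitSquare] at *
  · exact hf.integral_prod_left.comp_fst _
  · exact integral_prod_integral_snd hf

/-- The mean oscillation of `w` over the unit square. -/
def meanOscillation (w : ℝ × ℝ → ℝ) : ℝ :=
  ∫ y in unitSquare, |w y - ∫ y' in unitSquare, w y'|

lemma abs_setIntegral_unitSquare_le (hw : ∀ y ∈ unitSquare, |w y| ≤ M) :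
    |∫ y in unitSquare, w y| ≤ M := by
  have hbound := norm_integral_le_of_norm_le_const (f := w)
    (ae_restrict_of_forall_mem (μ := volume) measurableSet_unitSquare hw)
  rwa [probReal_univ, mul_one] at hbound

lemma abs_mean_comp_mul_sub_mean_le (hw : IntegrableOn w unitSquare) (hv₁ : v.1 ∈ Ioc 0 1)
    (hv₂ : v.2 ∈ Ioc 0 1) :
    |(∫ y in unitSquare, w (v * y)) - ∫ y in unitSquare, w y| ≤
      (v.1 * v.2)⁻¹ * meanOscillation w := by
  set m := ∫ y in unitSquare, w y
  have hosc : IntegrableOn (fun y => |w y - m|) unitSquare := (hw.sub (integrable_const m)).abs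
  have hsub : (∫ y in unitSquare, w (v * y)) - m = ∫ y in unitSquare, (w (v * y) - m) := by
    rw [integral_sub (integrableOn_unitSquare_comp_mul hw hv₁ hv₂) (integrable_const m),
      integral_const, probReal_univ, one_smul]
  calc |(∫ y in unitSquare, w (v * y)) - m| ≤ ∫ y in unitSquare, |w (v * y) - m| :=
        hsub ▸ abs_integral_le_integral_abs
    _ ≤ (v.1 * v.2)⁻¹ * meanOscillation w :=
        setIntegral_unitSquare_comp_mul_le hosc (fun _ _ => abs_nonneg _) hv₁ hv₂

lemma meanOscillation_le_of_abs_le (hw : ∀ y ∈ unitSquare, |w y| ≤ M) :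
    meanOscillation w ≤ 2 * M := by
  refine (le_abs_self _).trans (abs_setIntegral_unitSquare_le fun y hy => ?_)
  rw [abs_abs]
  linarith [abs_sub (w y) (∫ y in unitSquare, w y), hw y hy, abs_setIntegral_unitSquare_le hw]

/-- Twice the mean of `w` over the half of the unit square adjacent to the edge `x = 0`, minus the
mean over the whole square. This is a mean of `w` which, for smooth `w`, extrapolates the values at
`x = 0` to second order: the term `w_x` cancels. -/
def extrapolatedMean (w : ℝ × ℝ → ℝ) : ℝ :=
  2 * (∫ y in unitSquare, w ((1 / 2, 1) * y)) - ∫ y in unitSquare, w y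

lemma abs_extrapolatedMean_sub_mean_le (hw : IntegrableOn w unitSquare) :
    |extrapolatedMean w - ∫ y in unitSquare, w y| ≤ 4 * meanOscillation w := by
  have hhalf := abs_mean_comp_mul_sub_mean_le (v := (1 / 2, 1)) hw (by norm_num) (by norm_num)
  calc |extrapolatedMean w - ∫ y in unitSquare, w y|
      = 2 * |(∫ y in unitSquare, w ((1 / 2, 1) * y)) - ∫ y in unitSquare, w y| := by
        rw [extrapolatedMean, ← abs_two, ← abs_mul, abs_two]; ring_nf
    _ ≤ 4 * meanOscillation w := by norm_num at hhalf ⊢; linarith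

end UnitSquare

section PartialDerivatives

variable {u : ℝ × ℝ → ℝ}

lemma hasDerivAt_Dx2 {x t : ℝ} (hu : DifferentiableAt ℝ u (x, t)) :
    HasDerivAt (fun x => u (x, t)) (Dx2 u (x, t)) x :=
  hu.hasFDerivAt.comp_hasDerivAt x ((hasDerivAt_id x).prodMk (hasDerivAt_const x t))

lemma hasDerivAt_Dt2 {x t : ℝ} (hu : DifferentiableAt ℝ u (x, t)) :
    HasDerivAt (fun t => u (x, t)) (Dt2 u (x, t)) t :=
  hu.hasFDerivAt.comp_hasDerivAt t ((hasDerivAt_const t x).prodMk (hasDerivAt_id t))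

lemma contDiff_Dx2 {n : ℕ∞} (hu : ContDiff ℝ (n + 1) u) : ContDiff ℝ n (Dx2 u) :=
  (hu.fderiv_right le_rfl).clm_apply contDiff_const

lemma contDiff_Dt2 {n : ℕ∞} (hu : ContDiff ℝ (n + 1) u) : ContDiff ℝ n (Dt2 u) :=
  (hu.fderiv_right le_rfl).clm_apply contDiff_const

lemma fderiv_comp_add_mul {c v y : ℝ × ℝ} (hu : DifferentiableAt ℝ u (c + v * y)) (e : ℝ × ℝ) :
    fderiv ℝ (fun y => u (c + v * y)) y e = fderiv ℝ u (c + v * y) (v * e) := by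
  have haffine : HasFDerivAt (fun y : ℝ × ℝ => c + v * y) (ContinuousLinearMap.mul ℝ (ℝ × ℝ) v) y :=
    ((ContinuousLinearMap.mul ℝ (ℝ × ℝ) v).hasFDerivAt).const_add c
  exact DFunLike.congr_fun (hu.hasFDerivAt.comp y haffine).fderiv e

lemma Dx2_comp_add_mul {c v y : ℝ × ℝ} (hu : DifferentiableAt ℝ u (c + v * y)) :
    Dx2 (fun y => u (c + v * y)) y = v.1 * Dx2 u (c + v * y) := by
  have he : v * (1, 0) = v.1 • ((1, 0) : ℝ × ℝ) := by ext <;> simp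
  rw [Dx2, Dx2, fderiv_comp_add_mul hu, he, map_smul, smul_eq_mul]

lemma Dt2_comp_add_mul {c v y : ℝ × ℝ} (hu : DifferentiableAt ℝ u (c + v * y)) :
    Dt2 (fun y => u (c + v * y)) y = v.2 * Dt2 u (c + v * y) := by
  have he : v * (0, 1) = v.2 • ((0, 1) : ℝ × ℝ) := by ext <;> simp
  rw [Dt2, Dt2, fderiv_comp_add_mul hu, he, map_smul, smul_eq_mul]

lemma Dx2_Dx2_comp_add_mul (hu : ContDiff ℝ 2 u) (c v y : ℝ × ℝ) :
    Dx2 (Dx2 fun y => u (c + v * y)) y = v.1 ^ 2 * Dx2 (Dx2 u) (c + v * y) := by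
  have hDx : Dx2 (fun y => u (c + v * y)) = fun y => v.1 • Dx2 u (c + v * y) := by
    ext y
    exact Dx2_comp_add_mul (hu.differentiable two_ne_zero _)
  have hdiff : Differentiable ℝ (Dx2 u) := (contDiff_Dx2 (n := 1) hu).differentiable one_ne_zero
  have hsmul : Dx2 (fun y => v.1 • Dx2 u (c + v * y)) y =
      v.1 * Dx2 (fun y => Dx2 u (c + v * y)) y := by
    rw [Dx2, Dx2, fderiv_fun_const_smul (by fun_prop)]
    rfl
  rw [hDx, hsmul, Dx2_comp_add_mul (hdiff _)]
  ring

end PartialDerivatives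

section Extrapolation

variable {w : ℝ × ℝ → ℝ} {a b : ℝ}

lemma abs_mean_comp_mul_time_sub_mean_le (hw : ContDiff ℝ 1 w) (hb : b ∈ Icc 0 1) :
    |(∫ y in unitSquare, w ((1, b) * y)) - ∫ y in unitSquare, w y| ≤
      ∫ y in unitSquare, |Dt2 w y| := by
  have hcont : Continuous w := hw.continuous
  have hDt : Continuous (Dt2 w) := (contDiff_Dt2 (n := 0) hw).continuous
  have hpoint (y : ℝ × ℝ) (hy : y ∈ unitSquare) :
      |w ((1, b) * y) - w y| ≤ ∫ t in (0 : ℝ)..1, |Dt2 w (y.1, t)| := by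
    have hincr := norm_sub_le_intervalIntegral_norm_deriv
      (fun t _ => hasDerivAt_Dt2 (hw.differentiable one_ne_zero (y.1, t)))
      (Continuous.intervalIntegrable (by fun_prop) 0 1) (Ioo_subset_Icc_self hy.2)
      (unitInterval.mul_mem hb (Ioo_subset_Icc_self hy.2))
    simpa [Prod.mul_def] using hincr
  calc |(∫ y in unitSquare, w ((1, b) * y)) - ∫ y in unitSquare, w y|
      = |∫ y in unitSquare, (w ((1, b) * y) - w y)| := by
        rw [integral_sub (integrableOn_unitSquare_of_continuous (by fun_prop))
          (integrableOn_unitSquare_of_continuous hcont)]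
    _ ≤ ∫ y in unitSquare, |w ((1, b) * y) - w y| := abs_integral_le_integral_abs
    _ ≤ ∫ y in unitSquare, |Dt2 w y| :=
        setIntegral_unitSquare_le_of_le_integral_snd
          (integrableOn_unitSquare_of_continuous (by fun_prop))
          (integrableOn_unitSquare_of_continuous hDt.abs) hpoint

lemma abs_extrapolation_fst_le (hw : ContDiff ℝ 2 w) {x : ℝ} (hx : x ∈ Icc 0 1) (t : ℝ) :
    |2 * w (x / 2, t) - w (x, t) - w (0, t)| ≤
      1 / 2 * ∫ x' in (0 : ℝ)..1, |Dx2 (Dx2 w) (x', t)| := by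
  have hDx : ContDiff ℝ 1 (Dx2 w) := contDiff_Dx2 hw
  have hDxx : Continuous (Dx2 (Dx2 w)) := (contDiff_Dx2 (n := 0) hDx).continuous
  have hdiff := norm_second_difference_le hx.1
    (fun x' _ => hasDerivAt_Dx2 (hw.differentiable two_ne_zero (x', t)))
    (fun x' _ => hasDerivAt_Dx2 (hDx.differentiable one_ne_zero (x', t)))
    (Continuous.intervalIntegrable (by fun_prop) 0 x)
  have hmono : ∫ x' in (0 : ℝ)..x, |Dx2 (Dx2 w) (x', t)| ≤
      ∫ x' in (0 : ℝ)..1, |Dx2 (Dx2 w) (x', t)| :=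
    intervalIntegral.integral_mono_interval le_rfl hx.1 hx.2
      (Eventually.of_forall fun x' => abs_nonneg _)
      (Continuous.intervalIntegrable (by fun_prop) 0 1)
  have hnonneg : 0 ≤ ∫ x' in (0 : ℝ)..x, |Dx2 (Dx2 w) (x', t)| :=
    intervalIntegral.integral_nonneg hx.1 fun x' _ => abs_nonneg _
  calc |2 * w (x / 2, t) - w (x, t) - w (0, t)|
      = ‖(w (x, t) - w ((0 + x) / 2, t)) - (w ((0 + x) / 2, t) - w (0, t))‖ := by
        rw [zero_add, Real.norm_eq_abs, ← abs_neg]; ring_nf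
    _ ≤ (x - 0) / 2 * ∫ x' in (0 : ℝ)..x, |Dx2 (Dx2 w) (x', t)| := hdiff
    _ ≤ 1 / 2 * ∫ x' in (0 : ℝ)..1, |Dx2 (Dx2 w) (x', t)| := by
        gcongr
        linarith [hx.2]

lemma abs_extrapolatedMean_sub_trace_le (hw : ContDiff ℝ 2 w) :
    |extrapolatedMean w - ∫ y in unitSquare, w (0, y.2)| ≤
      1 / 2 * ∫ y in unitSquare, |Dx2 (Dx2 w) y| := by
  have hcont : Continuous w := hw.continuous
  have hDxx : Continuous (Dx2 (Dx2 w)) :=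
    (contDiff_Dx2 (n := 0) (contDiff_Dx2 (n := 1) hw)).continuous
  have hpoint (y : ℝ × ℝ) (hy : y ∈ unitSquare) :
      |2 * w ((1 / 2, 1) * y) - w y - w (0, y.2)| ≤
        ∫ x in (0 : ℝ)..1, 1 / 2 * |Dx2 (Dx2 w) (x, y.2)| := by
    have hhalf : (1 / 2, 1) * y = (y.1 / 2, y.2) := by ext <;> simp; ring
    rw [hhalf, intervalIntegral.integral_const_mul]
    exact abs_extrapolation_fst_le hw (Ioo_subset_Icc_self hy.1) y.2
  calc |extrapolatedMean w - ∫ y in unitSquare, w (0, y.2)|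
      = |∫ y in unitSquare, (2 * w ((1 / 2, 1) * y) - w y - w (0, y.2))| := by
        rw [integral_sub (integrableOn_unitSquare_of_continuous (by fun_prop))
          (integrableOn_unitSquare_of_continuous (by fun_prop)),
          integral_sub (integrableOn_unitSquare_of_continuous (by fun_prop))
          (integrableOn_unitSquare_of_continuous hcont), integral_const_mul, extrapolatedMean]
    _ ≤ ∫ y in unitSquare, |2 * w ((1 / 2, 1) * y) - w y - w (0, y.2)| :=
        abs_integral_le_integral_abs
    _ ≤ ∫ y in unitSquare, 1 / 2 * |Dx2 (Dx2 w) y| :=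
        setIntegral_unitSquare_le_of_le_integral_fst
          (integrableOn_unitSquare_of_continuous (by fun_prop))
          (integrableOn_unitSquare_of_continuous (by fun_prop)) hpoint
    _ = 1 / 2 * ∫ y in unitSquare, |Dx2 (Dx2 w) y| := integral_const_mul _ _

lemma setIntegral_abs_Dt2_comp_mul_space_le (hw : ContDiff ℝ 1 w) (ha : a ∈ Ioc 0 1) :
    ∫ y in unitSquare, |Dt2 (fun y => w ((a, 1) * y)) y| ≤ a⁻¹ * ∫ y in unitSquare, |Dt2 w y| := by
  have hDt : Continuous (Dt2 w) := (contDiff_Dt2 (n := 0) hw).continuous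
  have hchain (y : ℝ × ℝ) : Dt2 (fun y => w ((a, 1) * y)) y = Dt2 w ((a, 1) * y) := by
    simpa using Dt2_comp_add_mul (c := 0) (v := (a, 1)) (hw.differentiable one_ne_zero (_ + _ * y))
  simpa [hchain] using setIntegral_unitSquare_comp_mul_le (v := (a, 1))
    (integrableOn_unitSquare_of_continuous hDt.abs) (fun _ _ => abs_nonneg _) ha (by simp)

lemma setIntegral_abs_Dx2_Dx2_comp_mul_space_le (hw : ContDiff ℝ 2 w) (ha : a ∈ Ioc 0 1) :
    ∫ y in unitSquare, |Dx2 (Dx2 fun y => w ((a, 1) * y)) y| ≤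
      a * ∫ y in unitSquare, |Dx2 (Dx2 w) y| := by
  have hDxx : Continuous (Dx2 (Dx2 w)) :=
    (contDiff_Dx2 (n := 0) (contDiff_Dx2 (n := 1) hw)).continuous
  have hchain (y : ℝ × ℝ) :
      Dx2 (Dx2 fun y => w ((a, 1) * y)) y = a ^ 2 * Dx2 (Dx2 w) ((a, 1) * y) := by
    simpa using Dx2_Dx2_comp_add_mul hw 0 (a, 1) y
  have hdilate := setIntegral_unitSquare_comp_mul_le (v := (a, 1))
    (integrableOn_unitSquare_of_continuous hDxx.abs) (fun _ _ => abs_nonneg _) ha (by simp)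
  have ha₀ : a ≠ 0 := ha.1.ne'
  calc ∫ y in unitSquare, |Dx2 (Dx2 fun y => w ((a, 1) * y)) y|
      = a ^ 2 * ∫ y in unitSquare, |Dx2 (Dx2 w) ((a, 1) * y)| := by
        simp only [hchain, abs_mul, abs_pow, sq_abs, integral_const_mul]
    _ ≤ a ^ 2 * ((a * 1)⁻¹ * ∫ y in unitSquare, |Dx2 (Dx2 w) y|) := by gcongr
    _ = a * ∫ y in unitSquare, |Dx2 (Dx2 w) y| := by field_simp

lemma abs_extrapolatedMean_comp_mul_space_sub_le (hw : ContDiff ℝ 2 w) (ha : a ∈ Ioc 0 1) :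
    |extrapolatedMean (fun y => w ((a, 1) * y)) - extrapolatedMean w| ≤
      ∫ y in unitSquare, |Dx2 (Dx2 w) y| := by
  have htrace := abs_extrapolatedMean_sub_trace_le hw
  have htrace' := abs_extrapolatedMean_sub_trace_le (w := fun y => w ((a, 1) * y)) (by fun_prop)
  have hshrink := setIntegral_abs_Dx2_Dx2_comp_mul_space_le hw ha
  have hnonneg : 0 ≤ ∫ y in unitSquare, |Dx2 (Dx2 w) y| := integral_nonneg fun _ => abs_nonneg _
  have ha₁ : a * (∫ y in unitSquare, |Dx2 (Dx2 w) y|) ≤ ∫ y in unitSquare, |Dx2 (Dx2 w) y| :=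
    mul_le_of_le_one_left hnonneg ha.2
  simp only [Prod.mk_mul_mk, mul_zero, one_mul] at htrace'
  rw [abs_sub_comm] at htrace
  linarith [abs_sub_le (extrapolatedMean fun y => w ((a, 1) * y))
    (∫ y in unitSquare, w (0, y.2)) (extrapolatedMean w)]

lemma abs_extrapolatedMean_comp_mul_time_sub_le (hw : ContDiff ℝ 1 w) (hb : b ∈ Icc 0 1) :
    |extrapolatedMean (fun y => w ((1, b) * y)) - extrapolatedMean w| ≤
      5 * ∫ y in unitSquare, |Dt2 w y| := by
  have hfull := abs_mean_comp_mul_time_sub_mean_le hw hb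
  have hhalf := (abs_mean_comp_mul_time_sub_mean_le (w := fun y => w ((1 / 2, 1) * y))
    (by fun_prop) hb).trans (setIntegral_abs_Dt2_comp_mul_space_le hw (by norm_num))
  simp only [mul_left_comm ((1 / 2, 1) : ℝ × ℝ)] at hhalf
  rw [extrapolatedMean, extrapolatedMean]
  rw [abs_le] at *
  constructor <;> linarith [hfull.1, hfull.2, hhalf.1, hhalf.2]

lemma abs_extrapolatedMean_comp_mul_sub_le (hw : ContDiff ℝ 2 w) (ha : a ∈ Ioc 0 1)
    (hb : b ∈ Icc 0 1) :
    |extrapolatedMean (fun y => w ((a, b) * y)) - extrapolatedMean w| ≤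
      (∫ y in unitSquare, |Dx2 (Dx2 w) y|) + 5 * a⁻¹ * ∫ y in unitSquare, |Dt2 w y| := by
  have hspace := abs_extrapolatedMean_comp_mul_space_sub_le hw ha
  have hw₁ : ContDiff ℝ 1 w := hw.of_le one_le_two
  have htime := abs_extrapolatedMean_comp_mul_time_sub_le (w := fun y => w ((a, 1) * y))
    (by fun_prop) hb
  have hshrink := setIntegral_abs_Dt2_comp_mul_space_le hw₁ ha
  simp only [← mul_assoc, Prod.mk_mul_mk, mul_one, one_mul] at htime
  linarith [abs_sub_le (extrapolatedMean fun y => w ((a, b) * y))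
    (extrapolatedMean fun y => w ((a, 1) * y)) (extrapolatedMean w)]

end Extrapolation

section ParabolicCubes

variable {z h : ℝ × ℝ} {r s : ℝ}

lemma pCube2_eq_prod (z : ℝ × ℝ) (hr : 0 < r) :
    pCube2 z r = Ioo (z.1 - r) (z.1 + r) ×ˢ Ioo (z.2 - r ^ 2) (z.2 + r ^ 2) := by
  ext p
  simp only [pCube2, pnorm2, mem_ofPred_eq, max_lt_iff, mem_prod, ← Real.ball_eq_Ioo,
    mem_ball_iff_norm, Real.norm_eq_abs, Prod.fst_sub, Prod.snd_sub, Real.sqrt_lt' hr]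

lemma measurableSet_pCube2 (z : ℝ × ℝ) (hr : 0 < r) : MeasurableSet (pCube2 z r) :=
  pCube2_eq_prod z hr ▸ measurableSet_Ioo.prod measurableSet_Ioo

lemma volume_pCube2 (z : ℝ × ℝ) (hr : 0 < r) :
    volume (pCube2 z r) = ENNReal.ofReal (4 * r ^ 3) := by
  rw [pCube2_eq_prod z hr, Measure.volume_eq_prod, Measure.prod_prod, Real.volume_Ioo,
    Real.volume_Ioo, ← ENNReal.ofReal_mul (by linarith)]
  congr 1
  ring

/-- `h` is the offset from one of the four corners of a parabolic cube of radius `r` to its centre.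
The cube with this corner at `z` is `pCube2 (z + h) r`, and `y ↦ z + 2 * h * y` maps the unit square
onto it. -/
structure IsCornerOffset (h : ℝ × ℝ) (r : ℝ) : Prop where
  pos : 0 < r
  abs_fst : |h.1| = r
  abs_snd : |h.2| = r ^ 2

/-- The factor by which points of `ℝ × ℝ` are multiplied under the parabolic dilation
`(x, t) ↦ (s x, s² t)`. -/
def parabolicScale (s : ℝ) : ℝ × ℝ := (s, s ^ 2)

/-- The function `u` on the parabolic cube with corner `z` and centre `z + h`, transported to the
unit square in such a way that the corner becomes the origin. -/
def cornerPullback (u : ℝ × ℝ → ℝ) (z h : ℝ × ℝ) : ℝ × ℝ → ℝ := fun y => u (z + 2 * h * y)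

lemma parabolicScale_mul (s s' : ℝ) :
    parabolicScale (s * s') = parabolicScale s * parabolicScale s' := by
  simp [parabolicScale, mul_pow]

lemma IsCornerOffset.parabolicScale_mul (hh : IsCornerOffset h r) (hs : 0 < s) :
    IsCornerOffset (parabolicScale s * h) (s * r) where
  pos := mul_pos hs hh.pos
  abs_fst := by rw [parabolicScale, Prod.fst_mul, abs_mul, abs_of_pos hs, hh.abs_fst]
  abs_snd := by rw [parabolicScale, Prod.snd_mul, abs_mul, abs_sq, hh.abs_snd, mul_pow]

lemma IsCornerOffset.abs_two_mul_fst_mul_snd (hh : IsCornerOffset h r) :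
    |(2 * h).1 * (2 * h).2| = 4 * r ^ 3 := by
  simp only [Prod.fst_mul, Prod.snd_mul, Prod.fst_ofNat, Prod.snd_ofNat, abs_mul, abs_two,
    hh.abs_fst, hh.abs_snd]
  ring

lemma IsCornerOffset.two_mul_ne_zero (hh : IsCornerOffset h r) :
    (2 * h).1 ≠ 0 ∧ (2 * h).2 ≠ 0 := by
  have hr := hh.pos
  rw [← mul_ne_zero_iff, ← abs_pos, hh.abs_two_mul_fst_mul_snd]
  positivity

lemma IsCornerOffset.pCube2_parabolicScale_subset (hh : IsCornerOffset h r)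
    (hs : s ∈ Ioc 0 1) : pCube2 (z + parabolicScale s * h) (s * r) ⊆ pCube2 (z + h) r := by
  have key {a b c ρ : ℝ} (hc : c ∈ Icc 0 1) (hb : |b| = ρ) (ha : |a - c * b| < c * ρ) :
      |a - b| < ρ := by
    calc |a - b| ≤ |a - c * b| + |c * b - b| := abs_sub_le _ _ _
      _ = |a - c * b| + (1 - c) * ρ := by
          rw [← sub_one_mul, abs_mul, abs_sub_comm c, abs_of_nonneg (sub_nonneg.2 hc.2), hb]
      _ < ρ := by linarith
  have hs₂ : s ^ 2 ∈ Icc 0 1 := ⟨by positivity, pow_le_one₀ hs.1.le hs.2⟩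
  rw [pCube2_eq_prod _ (mul_pos hs.1 hh.pos), pCube2_eq_prod _ hh.pos]
  simp only [← Real.ball_eq_Ioo, parabolicScale, mul_pow]
  refine prod_mono (fun x hx => ?_) (fun t ht => ?_)
  · rw [mem_ball_iff_norm, Real.norm_eq_abs] at *
    simp only [Prod.fst_add, Prod.fst_mul, ← sub_sub] at *
    exact key (Ioc_subset_Icc_self hs) hh.abs_fst hx
  · rw [mem_ball_iff_norm, Real.norm_eq_abs] at *
    simp only [Prod.snd_add, Prod.snd_mul, ← sub_sub] at *
    exact key hs₂ hh.abs_snd ht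

lemma cornerPullback_mul (u : ℝ × ℝ → ℝ) (z h v y : ℝ × ℝ) :
    cornerPullback u z h (v * y) = cornerPullback u z (v * h) y := by
  rw [cornerPullback, cornerPullback]
  ring_nf

lemma IsCornerOffset.preimage_pCube2 (hh : IsCornerOffset h r) :
    (fun y => z + 2 * h * y) ⁻¹' pCube2 (z + h) r = unitSquare := by
  have key {a b ρ : ℝ} (hb : |b| = ρ) (hρ : 0 < ρ) (x : ℝ) :
      |a + 2 * b * x - (a + b)| < ρ ↔ x ∈ Ioo 0 1 := by
    have hfactor : a + 2 * b * x - (a + b) = b * (2 * x - 1) := by ring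
    rw [hfactor, abs_mul, hb, mul_lt_iff_lt_one_right hρ, abs_lt, mem_Ioo]
    constructor <;> rintro ⟨hl, hr⟩ <;> constructor <;> linarith
  ext y
  simp only [mem_preimage, pCube2_eq_prod _ hh.pos, ← Real.ball_eq_Ioo, mem_prod, mem_ball_iff_norm,
    Real.norm_eq_abs, unitSquare]
  exact and_congr (key hh.abs_fst hh.pos y.1) (key hh.abs_snd (pow_pos hh.pos 2) y.2)

lemma IsCornerOffset.setIntegral_cornerPullback (hh : IsCornerOffset h r)
    (f : ℝ × ℝ → ℝ) (z : ℝ × ℝ) :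
    ∫ y in unitSquare, cornerPullback f z h y = (4 * r ^ 3)⁻¹ * ∫ z' in pCube2 (z + h) r, f z' := by
  obtain ⟨hv₁, hv₂⟩ := hh.two_mul_ne_zero
  rw [← hh.preimage_pCube2 (z := z), ← hh.abs_two_mul_fst_mul_snd, ← smul_eq_mul]
  exact setIntegral_preimage_comp_add_mul f _ hv₁ hv₂

lemma IsCornerOffset.setAverage_pCube2 (hh : IsCornerOffset h r)
    (f : ℝ × ℝ → ℝ) (z : ℝ × ℝ) :
    ⨍ z' in pCube2 (z + h) r, f z' = ∫ y in unitSquare, cornerPullback f z h y := by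
  have hr := hh.pos
  rw [hh.setIntegral_cornerPullback, setAverage_eq, Measure.real, volume_pCube2 _ hh.pos,
    ENNReal.toReal_ofReal (by positivity), smul_eq_mul]

end ParabolicCubes

section BMO

variable {O : Set (ℝ × ℝ)} {u : ℝ × ℝ → ℝ} {z h : ℝ × ℝ} {r M : ℝ}

lemma IsCornerOffset.setAverage_abs_sub_setAverage (hh : IsCornerOffset h r)
    (u : ℝ × ℝ → ℝ) (z : ℝ × ℝ) :
    ⨍ z' in pCube2 (z + h) r, |u z' - ⨍ z'' in pCube2 (z + h) r, u z''| =
      meanOscillation (cornerPullback u z h) := by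
  rw [hh.setAverage_pCube2, hh.setAverage_pCube2 u]
  rfl

lemma bddAbove_oscSet2 (hu : ∀ z ∈ O, |u z| ≤ M) : BddAbove (oscSet2 O u) := by
  refine ⟨2 * M, ?_⟩
  rintro _ ⟨z, r, hr, hO, rfl⟩
  have hh : IsCornerOffset (r, r ^ 2) r := ⟨hr, abs_of_pos hr, abs_of_pos (pow_pos hr 2)⟩
  rw [← sub_add_cancel z (r, r ^ 2)] at hO ⊢
  rw [hh.setAverage_abs_sub_setAverage]
  refine meanOscillation_le_of_abs_le fun y hy => hu _ (hO ?_)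
  rwa [← hh.preimage_pCube2] at hy

lemma IsCornerOffset.meanOscillation_cornerPullback_le (hh : IsCornerOffset h r)
    (hO : pCube2 (z + h) r ⊆ O) (hu : ∀ z ∈ O, |u z| ≤ M) :
    meanOscillation (cornerPullback u z h) ≤ pBMO2 O u :=
  le_csSup (bddAbove_oscSet2 hu)
    ⟨z + h, r, hh.pos, hO, (hh.setAverage_abs_sub_setAverage u z).symm⟩

lemma pBMO2_nonneg (O : Set (ℝ × ℝ)) (u : ℝ × ℝ → ℝ) : 0 ≤ pBMO2 O u := by
  refine Real.sSup_nonneg ?_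
  rintro _ ⟨z, r, -, -, rfl⟩
  exact integral_nonneg fun _ => abs_nonneg _

end BMO

section LebesgueSpaces

variable {α E : Type*} [MeasurableSpace α] [NormedAddCommGroup E] {μ : Measure α}

lemma integral_norm_le_sqrt_measureReal_mul_eLpNorm_two [IsFiniteMeasure μ] {f : α → E}
    (hf : MemLp f 2 μ) : ∫ x, ‖f x‖ ∂μ ≤ √(μ.real univ) * (eLpNorm f 2 μ).toReal := by
  have hle := eLpNorm_le_eLpNorm_mul_rpow_measure_univ one_le_two hf.aestronglyMeasurable
  rw [integral_norm_eq_lintegral_enorm hf.aestronglyMeasurable, ← eLpNorm_one_eq_lintegral_enorm,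
    Real.sqrt_eq_rpow, Measure.real, ENNReal.toReal_rpow, mul_comm, ← ENNReal.toReal_mul]
  refine ENNReal.toReal_mono (ENNReal.mul_ne_top hf.eLpNorm_ne_top (by simp)) ?_
  norm_num at hle ⊢
  exact hle

lemma memLp_restrict_of_isBounded {X : Type*} [PseudoMetricSpace X] [ProperSpace X]
    [MeasurableSpace X] [OpensMeasurableSpace X] {μ : Measure X} [IsFiniteMeasureOnCompacts μ]
    {f : X → E} (hf : Continuous f) {s : Set X} (hs : Bornology.IsBounded s) (p : ℝ≥0∞) :
    MemLp f p (μ.restrict s) := by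
  have hcompact : IsCompact (closure s) := hs.isCompact_closure
  obtain ⟨C, hC⟩ := hcompact.exists_bound_of_continuousOn hf.continuousOn
  have : IsFiniteMeasure (μ.restrict (closure s)) := ⟨by simpa using hcompact.measure_lt_top⟩
  refine MemLp.mono_measure (Measure.restrict_mono_set μ subset_closure) (MemLp.of_bound
    (hf.continuousOn.aestronglyMeasurable_of_isCompact hcompact measurableSet_closure) C ?_)
  exact ae_restrict_of_forall_mem measurableSet_closure hC

end LebesgueSpaces

section InteriorCube

variable {O : Set (ℝ × ℝ)} {u f : ℝ × ℝ → ℝ} {z h : ℝ × ℝ} {r D : ℝ}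

lemma IsCornerOffset.setIntegral_abs_cornerPullback_le (hh : IsCornerOffset h r)
    (hO : pCube2 (z + h) r ⊆ O) (hf : IntegrableOn f O) :
    ∫ y in unitSquare, |cornerPullback f z h y| ≤ (4 * r ^ 3)⁻¹ * ∫ z' in O, |f z'| := by
  have hr := hh.pos
  have hmono : ∫ z' in pCube2 (z + h) r, |f z'| ≤ ∫ z' in O, |f z'| :=
    setIntegral_mono_set hf.abs (Eventually.of_forall fun _ => abs_nonneg _) hO.eventuallyLE
  exact (hh.setIntegral_cornerPullback (fun z' => |f z'|) z).trans_le (by gcongr)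

lemma IsCornerOffset.setIntegral_abs_cornerPullback_le_L2norm2 (hh : IsCornerOffset h r)
    (hO : pCube2 (z + h) r ⊆ O) (hf : MemLp f 2 (volume.restrict O)) :
    ∫ y in unitSquare, |cornerPullback f z h y| ≤ (√(4 * r ^ 3))⁻¹ * L2norm2 O f := by
  have hr := hh.pos
  have hvol : volume.real (pCube2 (z + h) r) = 4 * r ^ 3 := by
    rw [Measure.real, volume_pCube2 _ hh.pos, ENNReal.toReal_ofReal (by positivity)]
  have : IsFiniteMeasure (volume.restrict (pCube2 (z + h) r)) :=
    ⟨by simp only [Measure.restrict_apply_univ, volume_pCube2 _ hh.pos, ENNReal.ofReal_lt_top]⟩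
  have hle : volume.restrict (pCube2 (z + h) r) ≤ volume.restrict O :=
    Measure.restrict_mono_set _ hO
  have hQ : ∫ z' in pCube2 (z + h) r, |f z'| ≤ √(4 * r ^ 3) * L2norm2 O f := by
    refine (integral_norm_le_sqrt_measureReal_mul_eLpNorm_two (hf.mono_measure hle)).trans ?_
    rw [measureReal_restrict_apply_univ, hvol]
    gcongr
    exact ENNReal.toReal_mono hf.eLpNorm_ne_top (eLpNorm_mono_measure f hle)
  calc ∫ y in unitSquare, |cornerPullback f z h y|
      = (4 * r ^ 3)⁻¹ * ∫ z' in pCube2 (z + h) r, |f z'| :=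
        hh.setIntegral_cornerPullback (fun z' => |f z'|) z
    _ ≤ (4 * r ^ 3)⁻¹ * (√(4 * r ^ 3) * L2norm2 O f) := by gcongr
    _ = (√(4 * r ^ 3))⁻¹ * L2norm2 O f := by
        rw [← mul_assoc, inv_mul_eq_div, Real.sqrt_div_self]

lemma sqrt_four_mul_pow_three (hr : 0 ≤ r) : √(4 * r ^ 3) = 2 * r * √r := by
  have hsq : 4 * r ^ 3 = (2 * r) ^ 2 * r := by ring
  rw [hsq, Real.sqrt_mul (by positivity), Real.sqrt_sq (by positivity)]

lemma IsCornerOffset.setIntegral_abs_Dx2_Dx2_cornerPullback_le (hu : ContDiff ℝ 2 u)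
    (hbdd : Bornology.IsBounded O) (hh : IsCornerOffset h r)
    (hO : pCube2 (z + h) r ⊆ O) :
    ∫ y in unitSquare, |Dx2 (Dx2 (cornerPullback u z h)) y| ≤
      2 * √r * L2norm2 O (Dx2 (Dx2 u)) := by
  have hchain (y : ℝ × ℝ) : |Dx2 (Dx2 (cornerPullback u z h)) y| =
      4 * r ^ 2 * |cornerPullback (Dx2 (Dx2 u)) z h y| := by
    have hscale : (2 * h).1 ^ 2 = 4 * r ^ 2 := by
      rw [← hh.abs_fst, sq_abs, Prod.fst_mul, Prod.fst_ofNat]; ring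
    rw [← hscale, ← abs_sq, ← abs_mul]
    exact congrArg abs (Dx2_Dx2_comp_add_mul hu z (2 * h) y)
  have hDxx : Continuous (Dx2 (Dx2 u)) :=
    (contDiff_Dx2 (n := 0) (contDiff_Dx2 (n := 1) hu)).continuous
  simp only [hchain, integral_const_mul]
  calc 4 * r ^ 2 * ∫ y in unitSquare, |cornerPullback (Dx2 (Dx2 u)) z h y|
      ≤ 4 * r ^ 2 * ((√(4 * r ^ 3))⁻¹ * L2norm2 O (Dx2 (Dx2 u))) := by
        gcongr
        exact hh.setIntegral_abs_cornerPullback_le_L2norm2 hO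
          (memLp_restrict_of_isBounded hDxx hbdd 2)
    _ = 2 * √r * L2norm2 O (Dx2 (Dx2 u)) := by
        have hr := hh.pos
        rw [sqrt_four_mul_pow_three hh.pos.le]
        field_simp
        rw [Real.sq_sqrt hh.pos.le]
        ring

lemma IsCornerOffset.setIntegral_abs_Dt2_cornerPullback_le (hu : ContDiff ℝ 1 u)
    (hbdd : Bornology.IsBounded O) (hh : IsCornerOffset h r)
    (hO : pCube2 (z + h) r ⊆ O) :
    ∫ y in unitSquare, |Dt2 (cornerPullback u z h) y| ≤ √r * L2norm2 O (Dt2 u) := by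
  have hchain (y : ℝ × ℝ) : |Dt2 (cornerPullback u z h) y| =
      2 * r ^ 2 * |cornerPullback (Dt2 u) z h y| := by
    have hscale : |(2 * h).2| = 2 * r ^ 2 := by
      rw [← hh.abs_snd, Prod.snd_mul, Prod.snd_ofNat, abs_mul, abs_two]
    rw [← hscale, ← abs_mul]
    exact congrArg abs (Dt2_comp_add_mul (v := 2 * h) (hu.differentiable one_ne_zero _))
  have hDt : Continuous (Dt2 u) := (contDiff_Dt2 (n := 0) hu).continuous
  simp only [hchain, integral_const_mul]
  calc 2 * r ^ 2 * ∫ y in unitSquare, |cornerPullback (Dt2 u) z h y|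
      ≤ 2 * r ^ 2 * ((√(4 * r ^ 3))⁻¹ * L2norm2 O (Dt2 u)) := by
        gcongr
        exact hh.setIntegral_abs_cornerPullback_le_L2norm2 hO
          (memLp_restrict_of_isBounded hDt hbdd 2)
    _ = √r * L2norm2 O (Dt2 u) := by
        have hr := hh.pos
        rw [sqrt_four_mul_pow_three hh.pos.le]
        field_simp
        rw [Real.sq_sqrt hh.pos.le]

lemma contDiff_cornerPullback {n : ℕ∞} (hu : ContDiff ℝ n u) (z h : ℝ × ℝ) :
    ContDiff ℝ n (cornerPullback u z h) :=
  hu.comp (contDiff_const.add (contDiff_const.mul contDiff_id))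

lemma IsCornerOffset.abs_extrapolatedMean_parabolicScale_sub_le (hu : ContDiff ℝ 2 u)
    (hbdd : Bornology.IsBounded O) (hh : IsCornerOffset h r)
    (hO : pCube2 (z + h) r ⊆ O) (hxx : L2norm2 O (Dx2 (Dx2 u)) ≤ D) (ht : L2norm2 O (Dt2 u) ≤ D) :
    |extrapolatedMean (cornerPullback u z (parabolicScale 4⁻¹ * h)) -
      extrapolatedMean (cornerPullback u z h)| ≤ 22 * D * √r := by
  have hstep := abs_extrapolatedMean_comp_mul_sub_le (a := 4⁻¹) (b := 4⁻¹ ^ 2)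
    (contDiff_cornerPullback (n := 2) hu z h) (by norm_num) (by norm_num)
  simp only [cornerPullback_mul, inv_inv] at hstep
  have hspace := hh.setIntegral_abs_Dx2_Dx2_cornerPullback_le hu hbdd hO
  have htime := hh.setIntegral_abs_Dt2_cornerPullback_le (hu.of_le one_le_two) hbdd hO
  have hspace' : 2 * √r * L2norm2 O (Dx2 (Dx2 u)) ≤ 2 * √r * D := by gcongr
  have htime' : √r * L2norm2 O (Dt2 u) ≤ √r * D := by gcongr
  rw [parabolicScale]
  linarith

end InteriorCube

section Iteration

variable {O : Set (ℝ × ℝ)} {u : ℝ × ℝ → ℝ} {z h : ℝ × ℝ} {r s D M : ℝ}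

lemma inv_four_pow_mem_Ioc (k : ℕ) : (4⁻¹ : ℝ) ^ k ∈ Ioc 0 1 :=
  ⟨by positivity, pow_le_one₀ (by norm_num) (by norm_num)⟩

lemma parabolicScale_pow_succ_mul (s : ℝ) (k : ℕ) (h : ℝ × ℝ) :
    parabolicScale (s ^ (k + 1)) * h = parabolicScale s * (parabolicScale (s ^ k) * h) := by
  rw [pow_succ', parabolicScale_mul, mul_assoc]

lemma continuous_setIntegral_unitSquare {X : Type*} [TopologicalSpace X] [FirstCountableTopology X]
    [LocallyCompactSpace X] {F : X → ℝ × ℝ → ℝ} (hF : Continuous F.uncurry) :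
    Continuous fun x => ∫ y in unitSquare, F x y := by
  have hcompact : IsCompact (Icc (0 : ℝ) 1 ×ˢ Icc (0 : ℝ) 1) := isCompact_Icc.prod isCompact_Icc
  have hsub : unitSquare ⊆ Icc 0 1 ×ˢ Icc 0 1 := prod_mono Ioo_subset_Icc_self Ioo_subset_Icc_self
  have hcont := continuous_parametric_integral_of_continuous (μ := volume.restrict unitSquare)
    hF hcompact
  rwa [Measure.restrict_restrict hcompact.measurableSet, inter_eq_self_of_subset_right hsub]
    at hcont

lemma tendsto_extrapolatedMean_cornerPullback (hu : Continuous u) (z h : ℝ × ℝ) (hs : |s| < 1) :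
    Tendsto (fun k : ℕ => extrapolatedMean (cornerPullback u z (parabolicScale (s ^ k) * h))) atTop
      (𝓝 (u z)) := by
  have hcont : Continuous fun s =>
      extrapolatedMean (cornerPullback u z (parabolicScale s * h)) := by
    unfold extrapolatedMean cornerPullback parabolicScale
    exact (continuous_const.mul (continuous_setIntegral_unitSquare (by fun_prop))).sub
      (continuous_setIntegral_unitSquare (by fun_prop))
  have hzero : extrapolatedMean (cornerPullback u z (parabolicScale 0 * h)) = u z := by
    have hscale : parabolicScale 0 = 0 := by ext <;> simp [parabolicScale]
    simp only [extrapolatedMean, cornerPullback, hscale, zero_mul, mul_zero, add_zero,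
      integral_const, probReal_univ, one_smul]
    ring
  rw [← hzero]
  exact (hcont.tendsto 0).comp (tendsto_pow_atTop_nhds_zero_of_abs_lt_one hs)

lemma IsCornerOffset.abs_extrapolatedMean_sub_apply_le (hu : ContDiff ℝ 2 u)
    (hbdd : Bornology.IsBounded O) (hh : IsCornerOffset h r)
    (hO : pCube2 (z + h) r ⊆ O) (hxx : L2norm2 O (Dx2 (Dx2 u)) ≤ D) (ht : L2norm2 O (Dt2 u) ≤ D)
    (n : ℕ) :
    |extrapolatedMean (cornerPullback u z (parabolicScale (4⁻¹ ^ n) * h)) - u z| ≤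
      44 * D * √r / 2 ^ n := by
  refine dist_le_of_le_geometric_two_of_tendsto (fun k => ?_)
    (tendsto_extrapolatedMean_cornerPullback hu.continuous z h (by norm_num [abs_of_pos])) n
  have hs := inv_four_pow_mem_Ioc k
  have hstep := (hh.parabolicScale_mul hs.1).abs_extrapolatedMean_parabolicScale_sub_le hu hbdd
    ((hh.pCube2_parabolicScale_subset hs).trans hO) hxx ht
  have hsqrt : √((4⁻¹ : ℝ) ^ k * r) = √r / 2 ^ k := by
    have hsq : (4⁻¹ : ℝ) ^ k = (2⁻¹ ^ k) ^ 2 := by rw [← pow_mul, mul_comm k, pow_mul]; norm_num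
    rw [hsq, Real.sqrt_mul (sq_nonneg _), Real.sqrt_sq (by positivity), inv_pow, inv_mul_eq_div]
  rw [dist_comm, Real.dist_eq, parabolicScale_pow_succ_mul]
  refine hstep.trans_eq ?_
  rw [hsqrt]
  ring

lemma IsCornerOffset.abs_mean_sub_mean_le (hu : Continuous u) (hM : ∀ z ∈ O, |u z| ≤ M)
    (hh : IsCornerOffset h r) (hO : pCube2 (z + h) r ⊆ O) (n : ℕ) :
    |(∫ y in unitSquare, cornerPullback u z (parabolicScale (4⁻¹ ^ n) * h) y) -
      ∫ y in unitSquare, cornerPullback u z h y| ≤ n * (64 * pBMO2 O u) := by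
  induction n with
  | zero => simp [parabolicScale, ← Prod.one_eq_mk]
  | succ n ih =>
    have hs := inv_four_pow_mem_Ioc n
    have hosc := (hh.parabolicScale_mul hs.1).meanOscillation_cornerPullback_le
      ((hh.pCube2_parabolicScale_subset hs).trans hO) hM
    have hcont : Continuous (cornerPullback u z (parabolicScale (4⁻¹ ^ n) * h)) := by
      unfold cornerPullback; fun_prop
    have hstep := abs_mean_comp_mul_sub_mean_le (v := parabolicScale 4⁻¹)
      (integrableOn_unitSquare_of_continuous hcont) (by norm_num [parabolicScale])
      (by norm_num [parabolicScale])
    have hweight : ((parabolicScale 4⁻¹).1 * (parabolicScale 4⁻¹).2)⁻¹ = 64 := by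
      norm_num [parabolicScale]
    simp only [cornerPullback_mul, ← parabolicScale_pow_succ_mul, hweight] at hstep
    push_cast
    linarith [abs_sub_le
      (∫ y in unitSquare, cornerPullback u z (parabolicScale (4⁻¹ ^ (n + 1)) * h) y)
      (∫ y in unitSquare, cornerPullback u z (parabolicScale (4⁻¹ ^ n) * h) y)
      (∫ y in unitSquare, cornerPullback u z h y)]

lemma exists_nat_le_logPlus_and_le_two_pow (D : ℝ) :
    ∃ n : ℕ, (n : ℝ) ≤ 2 * logPlus D + 1 ∧ D ≤ 2 ^ n := by
  have hnonneg : 0 ≤ logPlus D := le_max_right _ _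
  refine ⟨⌈2 * logPlus D⌉₊, (Nat.ceil_lt_add_one (by positivity)).le, ?_⟩
  have hceil : 2 * logPlus D ≤ (⌈2 * logPlus D⌉₊ : ℝ) := Nat.le_ceil _
  rcases le_or_gt D 0 with hD | hD
  · exact hD.trans (by positivity)
  · rw [← Real.log_le_log_iff hD (by positivity), Real.log_pow]
    have hlog : Real.log D ≤ logPlus D := le_max_left _ _
    nlinarith [Real.log_two_gt_d9]

lemma IsCornerOffset.abs_apply_le (hu : ContDiff ℝ 2 u) (hbdd : Bornology.IsBounded O)
    (hh : IsCornerOffset h r) (hO : pCube2 (z + h) r ⊆ O)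
    (hxx : L2norm2 O (Dx2 (Dx2 u)) ≤ D) (ht : L2norm2 O (Dt2 u) ≤ D) :
    |u z| ≤ 44 * √r + 68 * pBMO2 O u * (1 + 2 * logPlus D) + (4 * r ^ 3)⁻¹ * ∫ z in O, |u z| := by
  obtain ⟨n, hn, hDn⟩ := exists_nat_le_logPlus_and_le_two_pow D
  obtain ⟨M, hM⟩ := hbdd.isCompact_closure.exists_bound_of_continuousOn hu.continuous.continuousOn
  have hM' : ∀ z ∈ O, |u z| ≤ M := fun z hz => hM z (subset_closure hz)
  have hs := inv_four_pow_mem_Ioc n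
  set w := cornerPullback u z (parabolicScale (4⁻¹ ^ n) * h) 
  have hwcont : Continuous w := (contDiff_cornerPullback (n := 2) hu z _).continuous
  have hlimit : |extrapolatedMean w - u z| ≤ 44 * √r := by
    refine (hh.abs_extrapolatedMean_sub_apply_le hu hbdd hO hxx ht n).trans ?_
    rw [div_le_iff₀ (by positivity), mul_right_comm]
    gcongr
  have hosc : |extrapolatedMean w - ∫ y in unitSquare, w y| ≤ 4 * pBMO2 O u :=
    (abs_extrapolatedMean_sub_mean_le (integrableOn_unitSquare_of_continuous hwcont)).trans
      (mul_le_mul_of_nonneg_left ((hh.parabolicScale_mul hs.1).meanOscillation_cornerPullback_le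
        ((hh.pCube2_parabolicScale_subset hs).trans hO) hM') (by norm_num))
  have hdrift : |(∫ y in unitSquare, w y) - ∫ y in unitSquare, cornerPullback u z h y| ≤
      n * (64 * pBMO2 O u) :=
    hh.abs_mean_sub_mean_le hu.continuous hM' hO n
  have hmean : |∫ y in unitSquare, cornerPullback u z h y| ≤ (4 * r ^ 3)⁻¹ * ∫ z in O, |u z| :=
    abs_integral_le_integral_abs.trans (hh.setIntegral_abs_cornerPullback_le hO
      (memLp_one_iff_integrable.1 (memLp_restrict_of_isBounded hu.continuous hbdd 1)))
  have hB : 0 ≤ pBMO2 O u := pBMO2_nonneg O u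
  have hlog : 0 ≤ pBMO2 O u * logPlus D := mul_nonneg hB (le_max_right _ _)
  have hn' : n * (64 * pBMO2 O u) ≤ (2 * logPlus D + 1) * (64 * pBMO2 O u) := by gcongr
  rw [abs_le] at *
  constructor <;> linarith

end Iteration

section Congruence

variable {O : Set (ℝ × ℝ)} {u v : ℝ × ℝ → ℝ}

lemma Dx2_eqOn (hO : IsOpen O) (huv : EqOn u v O) : EqOn (Dx2 u) (Dx2 v) O := fun z hz => by
  rw [Dx2, Dx2, (huv.eventuallyEq_of_mem (hO.mem_nhds hz)).fderiv_eq]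

lemma Dt2_eqOn (hO : IsOpen O) (huv : EqOn u v O) : EqOn (Dt2 u) (Dt2 v) O := fun z hz => by
  rw [Dt2, Dt2, (huv.eventuallyEq_of_mem (hO.mem_nhds hz)).fderiv_eq]

lemma L2norm2_congr (hO : MeasurableSet O) (huv : EqOn u v O) : L2norm2 O u = L2norm2 O v := by
  rw [L2norm2, L2norm2, eLpNorm_congr_ae (ae_restrict_of_forall_mem hO huv)]

lemma setAverage_abs_sub_setAverage_congr (hO : MeasurableSet O) (huv : EqOn u v O) :
    ⨍ z in O, |u z - ⨍ z' in O, u z'| = ⨍ z in O, |v z - ⨍ z' in O, v z'| := by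
  rw [setAverage_congr_fun hO (ae_of_all _ huv)]
  exact setAverage_congr_fun hO (ae_of_all _ fun z hz => by rw [huv hz])

lemma pBMO2_congr (huv : EqOn u v O) : pBMO2 O u = pBMO2 O v := by
  unfold pBMO2 oscSet2
  congr! 7 with _ z r
  refine and_congr_right fun hr => and_congr_right fun hO => ?_
  rw [setAverage_abs_sub_setAverage_congr (measurableSet_pCube2 z hr) (huv.mono hO)]

end Congruence

section Extension

open scoped Manifold in
lemma exists_contDiff_eqOn_of_contDiffOn {E F : Type*} [NormedAddCommGroup E] [NormedSpace ℝ E]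
    [FiniteDimensional ℝ E] [NormedAddCommGroup F] [NormedSpace ℝ F] {n : ℕ∞} {u : E → F}
    {K V : Set E} (hK : IsClosed K) (hV : IsOpen V) (hKV : K ⊆ V) (hu : ContDiffOn ℝ n u V) :
    ∃ v : E → F, ContDiff ℝ n v ∧ EqOn v u K := by
  obtain ⟨χ, hχ₀, hχ₁, -⟩ := exists_contMDiffMap_zero_one_nhds_of_isClosed (n := n) 𝓘(ℝ, E)
    hV.isClosed_compl hK (disjoint_compl_left_iff_subset.2 hKV)
  have hχ : ContDiff ℝ n χ := χ.contMDiff.contDiff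
  refine ⟨fun z => χ z • u z, contDiff_iff_contDiffAt.2 fun z => ?_, fun z hz => ?_⟩
  · by_cases hz : z ∈ V
    · exact hχ.contDiffAt.smul (hu.contDiffAt (hV.mem_nhds hz))
    · refine (contDiffAt_const (c := (0 : F))).congr_of_eventuallyEq ?_
      filter_upwards [eventually_nhdsSet_iff_forall.1 hχ₀ z hz] with y hy
      rw [hy, zero_smul]
  · simp only [hχ₁.self_of_nhdsSet z hz, one_smul]

end Extension

section Domains

/-- Every point of `O` is a corner of a parabolic cube of radius `r` contained in `O`. For a product
of two intervals this holds as soon as `r` and `r ^ 2` are at most a quarter of the side lengths. -/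
def HasInteriorCornerCubes (O : Set (ℝ × ℝ)) (r : ℝ) : Prop :=
  ∀ z ∈ O, ∃ h, IsCornerOffset h r ∧ pCube2 (z + h) r ⊆ O

lemma exists_abs_eq_Ioo_subset {a ρ x : ℝ} (hρ : 0 ≤ ρ) (ha : 4 * ρ ≤ a) (hx : x ∈ Ioo 0 a) :
    ∃ b, |b| = ρ ∧ Ioo (x + b - ρ) (x + b + ρ) ⊆ Ioo 0 a := by
  rcases le_total x (a / 2) with hxa | hxa
  · exact ⟨ρ, abs_of_nonneg hρ, Ioo_subset_Ioo (by linarith [hx.1]) (by linarith)⟩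
  · exact ⟨-ρ, by rw [abs_neg, abs_of_nonneg hρ],
      Ioo_subset_Ioo (by linarith) (by linarith [hx.2])⟩

lemma hasInteriorCornerCubes_Ioo_prod_Ioo {a b r : ℝ} (hr : 0 < r) (ha : 4 * r ≤ a)
    (hb : 4 * r ^ 2 ≤ b) : HasInteriorCornerCubes (Ioo 0 a ×ˢ Ioo 0 b) r := by
  rintro z ⟨hz₁, hz₂⟩
  obtain ⟨h₁, hh₁, hsub₁⟩ := exists_abs_eq_Ioo_subset hr.le ha hz₁
  obtain ⟨h₂, hh₂, hsub₂⟩ := exists_abs_eq_Ioo_subset (sq_nonneg r) hb hz₂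
  refine ⟨(h₁, h₂), ⟨hr, hh₁, hh₂⟩, ?_⟩
  rw [pCube2_eq_prod _ hr]
  exact prod_mono hsub₁ hsub₂

lemma exists_hasInteriorCornerCubes_Omega {T : ℝ} (hT : 0 < T) :
    ∃ r, 0 < r ∧ HasInteriorCornerCubes (Omega T) r := by
  have hr : 0 < min (1 / 4) T := lt_min (by norm_num) hT
  have hr₁ : min (1 / 4) T ≤ 1 / 4 := min_le_left _ _
  have hr₂ : min (1 / 4) T ≤ T := min_le_right _ _
  exact ⟨_, hr, hasInteriorCornerCubes_Ioo_prod_Ioo hr (by linarith) (by nlinarith)⟩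

lemma isOpen_Omega (T : ℝ) : IsOpen (Omega T) := isOpen_Ioo.prod isOpen_Ioo

lemma isBounded_Omega (T : ℝ) : Bornology.IsBounded (Omega T) :=
  Metric.isBounded_Ioo 0 1 |>.prod (Metric.isBounded_Ioo 0 T)

end Domains

section LogSobolev

variable {O : Set (ℝ × ℝ)} {u : ℝ × ℝ → ℝ} {r : ℝ}

lemma logPlus_nonneg (x : ℝ) : 0 ≤ logPlus x := le_max_right _ _

lemma logPlus_le_logPlus {x y : ℝ} (hx : 0 ≤ x) (hxy : x ≤ y) : logPlus x ≤ logPlus y := by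
  rw [logPlus, logPlus, max_comm, max_comm (Real.log y)]
  exact Real.posLog_le_posLog hx hxy

lemma L2norm2_Dx2_Dx2_add_L2norm2_Dt2_le_W21norm (O : Set (ℝ × ℝ)) (u : ℝ × ℝ → ℝ) :
    L2norm2 O (Dx2 (Dx2 u)) + L2norm2 O (Dt2 u) ≤ W21norm O u := by
  have hu : 0 ≤ L2norm2 O u := ENNReal.toReal_nonneg
  have hux : 0 ≤ L2norm2 O (Dx2 u) := ENNReal.toReal_nonneg
  rw [W21norm]
  linarith

lemma pBMO2_add_setIntegral_abs_nonneg (O : Set (ℝ × ℝ)) (u : ℝ × ℝ → ℝ) :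
    0 ≤ pBMO2 O u + ∫ z in O, |u z| :=
  add_nonneg (pBMO2_nonneg O u) (integral_nonneg fun _ => abs_nonneg _)

lemma HasInteriorCornerCubes.abs_apply_le_of_contDiff (hbdd : Bornology.IsBounded O)
    (hcubes : HasInteriorCornerCubes O r) (hu : ContDiff ℝ 2 u) {z : ℝ × ℝ} (hz : z ∈ O) :
    |u z| ≤ (44 * √r + 136 + (4 * r ^ 3)⁻¹) * (1 + (pBMO2 O u + ∫ z in O, |u z|) *
      (1 + logPlus (L2norm2 O (Dx2 (Dx2 u)) + L2norm2 O (Dt2 u)))) := by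
  obtain ⟨h, hh, hO⟩ := hcubes z hz
  have hr := hh.pos
  have hxx : 0 ≤ L2norm2 O (Dx2 (Dx2 u)) := ENNReal.toReal_nonneg
  have ht : 0 ≤ L2norm2 O (Dt2 u) := ENNReal.toReal_nonneg
  have hbound := hh.abs_apply_le hu hbdd hO (le_add_of_nonneg_right ht) (le_add_of_nonneg_left hxx)
  have hL := logPlus_nonneg (L2norm2 O (Dx2 (Dx2 u)) + L2norm2 O (Dt2 u))
  have hB := pBMO2_nonneg O u
  have hI : 0 ≤ ∫ z in O, |u z| := integral_nonneg fun _ => abs_nonneg _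
  generalize logPlus (L2norm2 O (Dx2 (Dx2 u)) + L2norm2 O (Dt2 u)) = L at *
  generalize pBMO2 O u = B at *
  generalize ∫ z in O, |u z| = I at *
  have hBX : B * (1 + 2 * L) ≤ 2 * ((B + I) * (1 + L)) := by nlinarith [mul_nonneg hI hL]
  have hIX : I ≤ (B + I) * (1 + L) := by nlinarith [mul_nonneg hI hL, mul_nonneg hB hL]
  calc |u z| ≤ 44 * √r + 68 * (B * (1 + 2 * L)) + (4 * r ^ 3)⁻¹ * I := by rwa [← mul_assoc 68]
    _ ≤ 44 * √r + 68 * (2 * ((B + I) * (1 + L))) + (4 * r ^ 3)⁻¹ * ((B + I) * (1 + L)) := by gcongr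
    _ ≤ 44 * √r + 68 * (2 * ((B + I) * (1 + L))) + (4 * r ^ 3)⁻¹ * ((B + I) * (1 + L)) +
        (44 * √r * ((B + I) * (1 + L)) + 136 + (4 * r ^ 3)⁻¹) :=
          le_add_of_nonneg_right (by positivity)
    _ = (44 * √r + 136 + (4 * r ^ 3)⁻¹) * (1 + (B + I) * (1 + L)) := by ring

theorem parabolic_log_sobolev_inequality_dim2_general (hr : 0 < r) :
    ∃ C : ℝ, 0 < C ∧ ∀ (O : Set (ℝ × ℝ)) (u : ℝ × ℝ → ℝ) (V : Set (ℝ × ℝ)),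
      IsOpen O → Bornology.IsBounded O → HasInteriorCornerCubes O r →
      IsOpen V → closure O ⊆ V → ContDiffOn ℝ 2 u V →
      (⨆ z ∈ O, |u z|) ≤ C * (1 + (pBMO2 O u + ∫ z in O, |u z|) *
        (1 + logPlus (L2norm2 O (Dx2 (Dx2 u)) + L2norm2 O (Dt2 u)))) := by
  refine ⟨44 * √r + 136 + (4 * r ^ 3)⁻¹, by positivity, fun O u V hO hbdd hcubes hV hOV hu => ?_⟩
  obtain ⟨v, hv, hvu⟩ := exists_contDiff_eqOn_of_contDiffOn (n := 2) isClosed_closure hV hOV hu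
  replace hvu : EqOn v u O := hvu.mono subset_closure
  have hL := logPlus_nonneg (L2norm2 O (Dx2 (Dx2 u)) + L2norm2 O (Dt2 u))
  have hN := pBMO2_add_setIntegral_abs_nonneg O u
  suffices hbound : ∀ z ∈ O, |u z| ≤ (44 * √r + 136 + (4 * r ^ 3)⁻¹) *
      (1 + (pBMO2 O u + ∫ z in O, |u z|) *
        (1 + logPlus (L2norm2 O (Dx2 (Dx2 u)) + L2norm2 O (Dt2 u)))) from
    Real.iSup_le (fun z => Real.iSup_le (hbound z) (by positivity)) (by positivity)
  intro z hz
  have hbound := hcubes.abs_apply_le_of_contDiff hbdd hv hz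
  rwa [hvu hz, pBMO2_congr hvu, L2norm2_congr hO.measurableSet (Dt2_eqOn hO hvu),
    L2norm2_congr hO.measurableSet (Dx2_eqOn hO (Dx2_eqOn hO hvu)),
    setIntegral_congr_fun hO.measurableSet fun z hz => congrArg abs (hvu hz)] at hbound

end LogSobolev

/-- **Parabolic logarithmic Sobolev inequality on `Ω_T = (0,1) × (0,T) ⊆ ℝ²`**
(Proposition 3.1, case `n = m = 1`), for functions smooth on a neighborhood of the closure
of `Ω_T`. -/
theorem parabolic_log_sobolev_inequality_dim2 (T : ℝ) (hT : 0 < T) :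
    ∃ C : ℝ, 0 < C ∧ ∀ (u : ℝ × ℝ → ℝ) (V : Set (ℝ × ℝ)),
      IsOpen V → closure (Omega T) ⊆ V → ContDiffOn ℝ (⊤ : ℕ∞) u V →
      (⨆ z ∈ Omega T, |u z|) ≤
        C * (1 + (pBMO2 (Omega T) u + ∫ z in Omega T, |u z|) *
          (1 + logPlus (W21norm (Omega T) u))) := by
  obtain ⟨r, hr, hcubes⟩ := exists_hasInteriorCornerCubes_Omega hT
  obtain ⟨C, hC, hbound⟩ := parabolic_log_sobolev_inequality_dim2_general hr
  refine ⟨C, hC, fun u V hV hTV hu => (hbound (Omega T) u V (isOpen_Omega T) (isBounded_Omega T)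
    hcubes hV hTV (hu.of_le (WithTop.coe_le_coe.2 le_top))).trans ?_⟩
  have hN := pBMO2_add_setIntegral_abs_nonneg (Omega T) u
  gcongr
  exact logPlus_le_logPlus (add_nonneg ENNReal.toReal_nonneg ENNReal.toReal_nonneg)
    (L2norm2_Dx2_Dx2_add_L2norm2_Dt2_le_W21norm _ _)

end
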